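/- Let X be a measurable space equipped with a probability measure μ, and let ν be the product probability measure on the space ℤ → X of all functions from ℤ to X. Then the shift map T : (ℤ → X) → (ℤ → X), defined by (T y)(n) = y(n + 1), is measure-preserving and ergodic with respect to ν. -/

import Mathlib

open MeasureTheory

/-!
The shift relabels the coordinates by `f n = n + 1`, an injective map without periodic points.
An invariant set `A` is approximated in measure by cylinders. Under the iterates of `f`, each
coordinate visits a finite set only finitely often, so some iterate moves the coordinates of a given
cylinder off themselves and makes the cylinder independent of its shifted copy. By invariance the
shifted copies approximate `A` just as well, so in the limit `A` is independent of itself and has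
measure `0` or `1`.
-/

open ProbabilityTheory Filter
open scoped Topology symmDiff ENNReal

lemma inter_symmDiff_inter_subset {α : Type*} (s t u v : Set α) :
    (s ∩ t) ∆ (u ∩ v) ⊆ s ∆ u ∪ t ∆ v := by
  intro x
  simp only [Set.mem_symmDiff, Set.mem_union, Set.mem_inter_iff]
  tauto

section Independence

variable {κ Ω : Type*} [MeasurableSpace Ω] {μ : Measure Ω} {l : Filter κ}
  {A B : Set Ω} {C D : κ → Set Ω}

lemma tendsto_measure_of_tendsto_measure_symmDiff (hC : ∀ k, MeasurableSet (C k))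
    (hA : MeasurableSet A) (h : Tendsto (fun k ↦ μ (C k ∆ A)) l (𝓝 0)) :
    Tendsto (fun k ↦ μ (C k)) l (𝓝 (μ A)) := by
  let C' : κ → MeasuredSets μ := fun k ↦ ⟨C k, hC k⟩
  let A' : MeasuredSets μ := ⟨A, hA⟩
  have hC' : Tendsto C' l (𝓝 A') := tendsto_iff_edist_tendsto_0.2 h
  exact (MeasuredSets.continuous_measure.tendsto A').comp hC'

lemma tendsto_measure_inter_symmDiff_inter (hCA : Tendsto (fun k ↦ μ (C k ∆ A)) l (𝓝 0))
    (hDB : Tendsto (fun k ↦ μ (D k ∆ B)) l (𝓝 0)) :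
    Tendsto (fun k ↦ μ ((C k ∩ D k) ∆ (A ∩ B))) l (𝓝 0) := by
  have hsum : Tendsto (fun k ↦ μ (C k ∆ A) + μ (D k ∆ B)) l (𝓝 0) := by
    simpa only [add_zero] using hCA.add hDB
  exact tendsto_of_tendsto_of_tendsto_of_le_of_le tendsto_const_nhds hsum (fun _ ↦ zero_le)
    fun k ↦ (measure_mono (inter_symmDiff_inter_subset _ _ _ _)).trans (measure_union_le _ _)

lemma indepSet_of_tendsto_measure_symmDiff [IsZeroOrProbabilityMeasure μ] [l.NeBot]
    (hC : ∀ k, MeasurableSet (C k)) (hD : ∀ k, MeasurableSet (D k))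
    (hA : MeasurableSet A) (hB : MeasurableSet B) (hCD : ∀ k, IndepSet (C k) (D k) μ)
    (hCA : Tendsto (fun k ↦ μ (C k ∆ A)) l (𝓝 0))
    (hDB : Tendsto (fun k ↦ μ (D k ∆ B)) l (𝓝 0)) :
    IndepSet A B μ := by
  refine (indepSet_iff_measure_inter_eq_mul hA hB μ).2 ?_
  have hinter : Tendsto (fun k ↦ μ (C k ∩ D k)) l (𝓝 (μ (A ∩ B))) :=
    tendsto_measure_of_tendsto_measure_symmDiff (fun k ↦ (hC k).inter (hD k)) (hA.inter hB)
      (tendsto_measure_inter_symmDiff_inter hCA hDB)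
  have hmul : Tendsto (fun k ↦ μ (C k) * μ (D k)) l (𝓝 (μ A * μ B)) :=
    ENNReal.Tendsto.mul (tendsto_measure_of_tendsto_measure_symmDiff hC hA hCA)
      (.inr (measure_ne_top μ B)) (tendsto_measure_of_tendsto_measure_symmDiff hD hB hDB)
      (.inr (measure_ne_top μ A))
  refine tendsto_nhds_unique hinter (hmul.congr fun k ↦ (hCD k).measure_inter_eq_mul.symm)

end Independence

section Ergodicity

variable {Ω : Type*} {mΩ : MeasurableSpace Ω} {μ : Measure Ω} {𝒜 : Set (Set Ω)} {A : Set Ω}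

lemma exists_seq_tendsto_measure_symmDiff_of_isSetAlgebra [IsFiniteMeasure μ]
    (h𝒜 : IsSetAlgebra 𝒜) (hgen : mΩ = .generateFrom 𝒜) (hA : MeasurableSet A) :
    ∃ C : ℕ → Set Ω, (∀ k, C k ∈ 𝒜) ∧ Tendsto (fun k ↦ μ (C k ∆ A)) atTop (𝓝 0) := by
  have hcover : ∃ 𝒟 : Set (Set Ω), 𝒟.Countable ∧ 𝒟 ⊆ 𝒜 ∧ μ (⋃₀ 𝒟)ᶜ = 0 :=
    ⟨{Set.univ}, Set.countable_singleton _, Set.singleton_subset_iff.2 h𝒜.univ_mem, by simp⟩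
  choose C hC𝒜 hCA using fun k : ℕ ↦ exists_measure_symmDiff_lt_of_generateFrom_isSetRing (μ := μ)
    h𝒜.isSetRing hcover hgen hA (ENNReal.inv_pos.2 (ENNReal.natCast_ne_top k))
  exact ⟨C, hC𝒜, tendsto_of_tendsto_of_tendsto_of_le_of_le tendsto_const_nhds
    ENNReal.tendsto_inv_nat_nhds_zero (fun _ ↦ zero_le) fun k ↦ (hCA k).le⟩

lemma ergodic_of_exists_indepSet_preimage_iterate [IsProbabilityMeasure μ] {T : Ω → Ω}
    (hT : MeasurePreserving T μ μ) (h𝒜 : IsSetAlgebra 𝒜) (hgen : mΩ = .generateFrom 𝒜)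
    (hindep : ∀ C ∈ 𝒜, ∃ n, IndepSet C (T^[n] ⁻¹' C) μ) :
    Ergodic T μ := by
  refine ⟨hT, ⟨fun A hA hinv ↦ ?_⟩⟩
  obtain ⟨C, hC𝒜, hCA⟩ :=
    exists_seq_tendsto_measure_symmDiff_of_isSetAlgebra (μ := μ) h𝒜 hgen hA
  have hC (k : ℕ) : MeasurableSet (C k) := hgen ▸ .basic _ (hC𝒜 k)
  choose n hn using fun k ↦ hindep (C k) (hC𝒜 k)
  have hshift (k : ℕ) : μ ((T^[n k] ⁻¹' C k) ∆ A) = μ (C k ∆ A) := by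
    have hAk : T^[n k] ⁻¹' A = A := Function.IsFixedPt.preimage_iterate hinv (n k)
    calc μ ((T^[n k] ⁻¹' C k) ∆ A)
      _ = μ (T^[n k] ⁻¹' (C k ∆ A)) := by rw [Set.preimage_symmDiff, hAk]
      _ = μ (C k ∆ A) :=
        (hT.iterate (n k)).measure_preimage ((hC k).symmDiff hA).nullMeasurableSet
  have hself : IndepSet A A μ :=
    indepSet_of_tendsto_measure_symmDiff hC (fun k ↦ (hT.iterate (n k)).measurable (hC k)) hA hA
      hn hCA (by simpa only [hshift] using hCA)
  rw [eventuallyConst_set]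
  rcases measure_eq_zero_or_one_of_indepSet_self hself with h0 | h1
  · exact .inr (measure_eq_zero_iff_ae_notMem.1 h0)
  · exact .inl ((mem_ae_iff_prob_eq_one hA).2 h1)

end Ergodicity

section Cylinders

variable {ι κ : Type*} {X : ι → Type*}

lemma preimage_precomp_cylinder (g : κ ↪ ι) (s : Finset κ) (S : Set (∀ k : s, X (g k))) :
    (fun (y : ∀ i, X i) k ↦ y (g k)) ⁻¹' cylinder (α := fun k ↦ X (g k)) s S =
      cylinder (s.map g) ((fun z (k : s) ↦ z ⟨g k, Finset.mem_map_of_mem g k.2⟩) ⁻¹' S) :=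
  rfl

lemma indepSet_cylinder_of_disjoint [∀ i, MeasurableSpace (X i)] (μ : ∀ i, Measure (X i))
    [∀ i, IsProbabilityMeasure (μ i)] {s t : Finset ι} (hst : Disjoint s t)
    {S : Set (∀ i : s, X i)} {T : Set (∀ i : t, X i)}
    (hS : MeasurableSet S) (hT : MeasurableSet T) :
    IndepSet (cylinder s S) (cylinder t T) (Measure.infinitePi μ) := by
  have hcoord : iIndepFun (fun i (y : ∀ i, X i) ↦ y i) (Measure.infinitePi μ) :=
    iIndepFun_infinitePi (X := fun _ x ↦ x) fun _ ↦ measurable_id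
  have hrestrict : IndepFun s.restrict t.restrict (Measure.infinitePi μ) :=
    hcoord.indepFun_finset s t hst measurable_pi_apply
  exact (indepFun_iff_indepSet_preimage (by fun_prop) (by fun_prop)).1 hrestrict S T hS hT

end Cylinders

section Relabelling

variable {ι X : Type*} {f : ι → ι}

lemma iterate_precomp (f : ι → ι) (n : ℕ) :
    (fun (y : ι → X) i ↦ y (f i))^[n] = fun y i ↦ y (f^[n] i) := by
  induction n with
  | zero => rfl
  | succ n ih => rw [Function.iterate_succ', ih]; rfl

lemma injective_iterate_apply_of_notMem_periodicPts (hf : f.Injective) {i : ι}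
    (hi : i ∉ Function.periodicPts f) : Function.Injective (f^[·] i) :=
  .of_lt_imp_ne fun _ _ hmn heq ↦
    hi (Function.mk_mem_periodicPts (Nat.sub_pos_of_lt hmn) (Function.iterate_cancel hf heq.symm))

lemma exists_iterate_notMem_of_periodicPts_eq_empty (hf : f.Injective)
    (hper : Function.periodicPts f = ∅) (s : Finset ι) : ∃ n, ∀ i ∈ s, f^[n] i ∉ s := by
  have hfin : (⋃ i ∈ s, {n | f^[n] i ∈ s}).Finite :=
    s.finite_toSet.biUnion fun i _ ↦ s.finite_toSet.preimage
      (injective_iterate_apply_of_notMem_periodicPts hf (by simp [hper])).injOn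
  simpa using hfin.exists_notMem

lemma exists_indepSet_preimage_iterate_precomp [MeasurableSpace X] (μ : Measure X)
    [IsProbabilityMeasure μ] (hf : f.Injective) (hper : Function.periodicPts f = ∅)
    {C : Set (ι → X)} (hC : C ∈ measurableCylinders fun _ : ι ↦ X) :
    ∃ n, IndepSet C ((fun (y : ι → X) i ↦ y (f i))^[n] ⁻¹' C)
      (Measure.infinitePi fun _ ↦ μ) := by
  obtain ⟨s, S, hS, rfl⟩ := (mem_measurableCylinders C).1 hC
  obtain ⟨n, hn⟩ := exists_iterate_notMem_of_periodicPts_eq_empty hf hper s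
  let g : ι ↪ ι := ⟨f^[n], hf.iterate n⟩
  have hdisj : Disjoint s (s.map g) :=
    (Finset.disjoint_left.2 (Finset.forall_mem_map.2 hn)).symm
  refine ⟨n, ?_⟩
  rw [iterate_precomp]
  change IndepSet _ ((fun (y : ι → X) i ↦ y (g i)) ⁻¹' _) _
  rw [preimage_precomp_cylinder]
  exact indepSet_cylinder_of_disjoint _ hdisj hS (measurableSet_preimage (by fun_prop) hS)

theorem bernoulli_shift_ergodic_general [MeasurableSpace X] (μ : Measure X)
    [IsProbabilityMeasure μ] (ν : Measure (ι → X))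
    (hν : ∀ (s : Finset ι) (t : ι → Set X), (∀ i ∈ s, MeasurableSet (t i)) →
      ν {y | ∀ i ∈ s, y i ∈ t i} = ∏ i ∈ s, μ (t i))
    (hf : f.Injective) (hper : Function.periodicPts f = ∅) :
    Ergodic (fun (y : ι → X) i ↦ y (f i)) ν := by
  obtain rfl : ν = Measure.infinitePi fun _ ↦ μ :=
    Measure.eq_infinitePi _ fun s t ht ↦ hν s t fun i _ ↦ ht i
  have hmp : MeasurePreserving (fun (y : ι → X) i ↦ y (f i)) (Measure.infinitePi fun _ ↦ μ)
      (Measure.infinitePi fun _ ↦ μ) :=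
    ⟨by fun_prop, Measure.map_infinitePi_infinitePi_of_inj (P := fun _ ↦ μ) hf⟩
  exact ergodic_of_exists_indepSet_preimage_iterate hmp isSetAlgebra_measurableCylinders
    generateFrom_measurableCylinders.symm
    fun _ ↦ exists_indepSet_preimage_iterate_precomp μ hf hper

end Relabelling

lemma periodicPts_add_right_eq_empty {M : Type*} [AddLeftCancelMonoid M] [IsAddTorsionFree M]
    {a : M} (ha : a ≠ 0) : Function.periodicPts (· + a) = ∅ := by
  refine Set.eq_empty_of_forall_notMem fun x ⟨n, hn, hx⟩ ↦ ?_
  have hsmul : x + n • a = x := by simpa [Function.IsPeriodicPt, Function.IsFixedPt] using hx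
  simp_all [hn.ne']

/-- The Bernoulli shift `(T y) n = y (n + 1)` on the product space
`ℤ → X`, equipped with the product probability measure `ν` of countably many copies of
`μ` (characterised by its values on cylinder sets), is measure-preserving and
ergodic. -/
theorem bernoulli_shift_ergodic
    {X : Type*} [MeasurableSpace X] (μ : Measure X) [IsProbabilityMeasure μ]
    (ν : Measure (ℤ → X)) [IsProbabilityMeasure ν]
    (hν : ∀ (s : Finset ℤ) (t : ℤ → Set X), (∀ i ∈ s, MeasurableSet (t i)) →
      ν {y | ∀ i ∈ s, y i ∈ t i} = ∏ i ∈ s, μ (t i)) :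
    MeasurePreserving (fun (y : ℤ → X) (n : ℤ) => y (n + 1)) ν ν ∧
    Ergodic (fun (y : ℤ → X) (n : ℤ) => y (n + 1)) ν := by
  have hT := bernoulli_shift_ergodic_general μ ν hν (add_left_injective (1 : ℤ))
    (periodicPts_add_right_eq_empty one_ne_zero)
  exact ⟨hT.toMeasurePreserving, hT⟩
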